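/- arXiv:2106.15741 — 2 statements merged into one kernel-verified Lean document; each statement's English description precedes it below -/
import Mathlib

section
/- Let N, M, R be von Neumann algebras acting on a complex Hilbert space H with N ⊆ R, M ⊆ R and N ⊆ M′. Suppose M is an infinite factor. Then every nonzero projection in N is infinite in R. -/
variable {H : Type*} [NormedAddCommGroup H] [InnerProductSpace ℂ H] [CompleteSpace H]

/-- `p` is a projection (an orthogonal projection operator). -/
def IsProjectionOp (p : H →L[ℂ] H) : Prop := IsSelfAdjoint p ∧ p * p = p

/-- Murray–von Neumann equivalence of `p` and `q` in the von Neumann algebra `M`. -/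
def MvNEquiv (M : VonNeumannAlgebra H) (p q : H →L[ℂ] H) : Prop :=
  ∃ v : H →L[ℂ] H, v ∈ M ∧ star v * v = p ∧ v * star v = q

/-- `p` is an infinite projection in `M`: it is Murray–von Neumann equivalent in `M`
to a projection `q ∈ M` with `q ≤ p` (i.e. `q·p = q`) and `q ≠ p`. -/
def InfiniteProj (M : VonNeumannAlgebra H) (p : H →L[ℂ] H) : Prop :=
  ∃ q : H →L[ℂ] H, q ∈ M ∧ IsProjectionOp q ∧ q * p = q ∧ q ≠ p ∧ MvNEquiv M p q

/-- `M` is a factor: its center consists of scalar multiples of the identity. -/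
def IsFactor (M : VonNeumannAlgebra H) : Prop :=
  ∀ x : H →L[ℂ] H, x ∈ M → x ∈ M.commutant → ∃ c : ℂ, x = c • (1 : H →L[ℂ] H)

/-- `M` is an infinite factor: a factor in which `1` is an infinite projection. -/
def InfiniteFactor (M : VonNeumannAlgebra H) : Prop :=
  IsFactor M ∧ InfiniteProj M 1

/-!
Compressing a partial isometry `v ∈ M` by a projection `p ∈ R ∩ M′` turns an equivalence `z ∼ q`
in `M` into an equivalence `p z ∼ p q` in `R`. If `z` is the central support of `p` in
`M′`, then `p z = p`, and `e ↦ p e` is injective on `z M`, so `q ≠ z` gives `p q ≠ p`. Hence `p` is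
infinite in `R` as soon as the central projection `z` is infinite in `M`; in a factor, `z = 1`.
-/

open VonNeumannAlgebra

theorem starProjection_mem_iff (A : VonNeumannAlgebra H) (K : Submodule ℂ H)
    [K.HasOrthogonalProjection] :
    K.starProjection ∈ A ↔ ∀ y ∈ A.commutant, ∀ x ∈ K, y x ∈ K := by
  rw [VonNeumannAlgebra.IsStarProjection.mem_iff isStarProjection_starProjection,
    Submodule.range_starProjection]
  rfl

theorem isProjectionOp_iff_isStarProjection {p : H →L[ℂ] H} :
    IsProjectionOp p ↔ IsStarProjection p :=
  ⟨fun h => ⟨h.2, h.1⟩, fun h => ⟨h.isSelfAdjoint, h.isIdempotentElem⟩⟩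

section CentralSupport

/-- The largest subspace of `ker a` invariant under `A`, encoded as the vectors `x` such that
`a * y` kills `x` for every `y ∈ A`. Its orthogonal complement is the range of the central support
of `a`. -/
def invariantKernel (A : VonNeumannAlgebra H) (a : H →L[ℂ] H) : Submodule ℂ H :=
  ⨅ y : A, (a * (y : H →L[ℂ] H)).ker

variable {A : VonNeumannAlgebra H} {a : H →L[ℂ] H}

theorem mem_invariantKernel_iff {x : H} : x ∈ invariantKernel A a ↔ ∀ y ∈ A, a (y x) = 0 := by
  simp [invariantKernel, Submodule.mem_iInf]

variable (A a) in
theorem isClosed_invariantKernel : IsClosed (invariantKernel A a : Set H) := by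
  rw [invariantKernel, Submodule.coe_iInf]
  exact isClosed_iInter fun y => (a * (y : H →L[ℂ] H)).isClosed_ker

instance : CompleteSpace (invariantKernel A a) :=
  (isClosed_invariantKernel A a).completeSpace_coe

variable (A a) in
theorem starProjection_invariantKernel_mem_commutant :
    (invariantKernel A a).starProjection ∈ A.commutant := by
  rw [starProjection_mem_iff, commutant_commutant]
  intro y hy x hx
  rw [mem_invariantKernel_iff] at hx ⊢
  exact fun y' hy' => hx (y' * y) (mul_mem hy' hy)

theorem starProjection_invariantKernel_mem (ha : a ∈ A) :
    (invariantKernel A a).starProjection ∈ A := by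
  rw [starProjection_mem_iff]
  intro m hm x hx
  rw [mem_invariantKernel_iff] at hx ⊢
  intro y hy
  have hcomm : a * y * m = m * (a * y) := mem_commutant_iff.1 hm _ (mul_mem ha hy)
  calc a (y (m x)) = m (a (y x)) := congr($hcomm x)
    _ = 0 := by rw [hx y hy, map_zero]

/-- The central support of `a` in `A`: for `a ∈ A`, the smallest projection `z` in the center of
`A` with `a * z = a`. -/
noncomputable def centralSupport (A : VonNeumannAlgebra H) (a : H →L[ℂ] H) : H →L[ℂ] H :=
  1 - (invariantKernel A a).starProjection

variable (A a) in
theorem isProjectionOp_centralSupport : IsProjectionOp (centralSupport A a) :=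
  isProjectionOp_iff_isStarProjection.2 isStarProjection_starProjection.one_sub

variable (A a) in
theorem centralSupport_mem_commutant : centralSupport A a ∈ A.commutant :=
  sub_mem (one_mem _) (starProjection_invariantKernel_mem_commutant A a)

theorem centralSupport_mem (ha : a ∈ A) : centralSupport A a ∈ A :=
  sub_mem (one_mem _) (starProjection_invariantKernel_mem ha)

variable (A a) in
theorem mul_centralSupport : a * centralSupport A a = a := by
  have hker : a * (invariantKernel A a).starProjection = 0 := by
    ext x
    exact mem_invariantKernel_iff.1 (Submodule.starProjection_apply_mem _ x) 1 (one_mem _)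
  rw [centralSupport, mul_sub, mul_one, hker, sub_zero]

theorem centralSupport_ne_zero (ha : a ≠ 0) : centralSupport A a ≠ 0 := fun h =>
  ha <| by rw [← mul_centralSupport A a, h, mul_zero]

theorem centralSupport_mul_eq_zero {e : H →L[ℂ] H} (he : e ∈ A.commutant) (h : a * e = 0) :
    centralSupport A a * e = 0 := by
  have hrange : ∀ x, e x ∈ invariantKernel A a := fun x => mem_invariantKernel_iff.2 fun y hy => by
    have hcomm : y * e = e * y := mem_commutant_iff.1 he y hy
    calc a (y (e x)) = a (e (y x)) := congr(a ($hcomm x))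
      _ = 0 := congr($h (y x))
  have hproj : (invariantKernel A a).starProjection * e = e := by
    ext x
    exact Submodule.starProjection_eq_self_iff.2 (hrange x)
  rw [centralSupport, sub_mul, one_mul, hproj, sub_self]

end CentralSupport

section Compression

variable {M R : VonNeumannAlgebra H} {p q z : H →L[ℂ] H}

theorem IsProjectionOp.mul (hp : IsProjectionOp p) (hq : IsProjectionOp q) (h : Commute p q) :
    IsProjectionOp (p * q) :=
  isProjectionOp_iff_isStarProjection.2 <| (isProjectionOp_iff_isStarProjection.1 hp).mul
    (isProjectionOp_iff_isStarProjection.1 hq) h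

theorem MvNEquiv.left_mem (h : MvNEquiv M p q) : p ∈ M := by
  obtain ⟨v, hv, rfl, -⟩ := h
  exact mul_mem (star_mem hv) hv

theorem MvNEquiv.compress (hMR : ∀ x ∈ M, x ∈ R) (hpR : p ∈ R) (hpM : p ∈ M.commutant)
    (hp : IsProjectionOp p) (h : MvNEquiv M z q) : MvNEquiv R (p * z) (p * q) := by
  obtain ⟨v, hv, rfl, rfl⟩ := h
  have hstar : star (p * v) = star v * p := by rw [star_mul, hp.1.star_eq]
  refine ⟨p * v, mul_mem hpR (hMR v hv), ?_, ?_⟩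
  · calc star (p * v) * (p * v) = star v * (p * p) * v := by rw [hstar]; noncomm_ring
      _ = p * (star v * v) := by
        rw [hp.2, mem_commutant_iff.1 hpM _ (star_mem hv), mul_assoc]
  · calc p * v * star (p * v) = p * (v * star v) * p := by rw [hstar]; noncomm_ring
      _ = p * (v * star v) := by
        rw [mul_assoc, mem_commutant_iff.1 hpM _ (mul_mem hv (star_mem hv)), ← mul_assoc, hp.2]

theorem InfiniteProj.compress (hMR : ∀ x ∈ M, x ∈ R) (hpR : p ∈ R) (hpM : p ∈ M.commutant)
    (hp : IsProjectionOp p) (hz : IsProjectionOp z)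
    (hfaithful : ∀ e ∈ M, p * e = 0 → z * e = 0) (h : InfiniteProj M z) :
    InfiniteProj R (p * z) := by
  obtain ⟨q, hqM, hq, hqz, hne, hequiv⟩ := h
  have hqp : q * p = p * q := mem_commutant_iff.1 hpM q hqM
  have hzq : z * q = q := by
    simpa only [star_mul, hz.1.star_eq, hq.1.star_eq] using congr(star $hqz)
  refine ⟨p * q, mul_mem hpR (hMR q hqM), hp.mul hq hqp.symm, ?_, ?_,
    hequiv.compress hMR hpR hpM hp⟩
  · calc p * q * (p * z) = p * (q * p) * z := by noncomm_ring
      _ = p * p * (q * z) := by rw [hqp]; noncomm_ring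
      _ = p * q := by rw [hp.2, hqz]
  · intro heq
    have hkill : z * (z - q) = 0 := hfaithful (z - q) (sub_mem hequiv.left_mem hqM) <| by
      rw [mul_sub, heq, sub_self]
    rw [mul_sub, hz.2, hzq, sub_eq_zero] at hkill
    exact hne hkill.symm

end Compression

/-- `M` is properly infinite: every nonzero projection in its center is infinite in `M`. The zero
algebra counts as properly infinite. -/
def IsProperlyInfinite (M : VonNeumannAlgebra H) : Prop :=
  ∀ z ∈ M, z ∈ M.commutant → IsProjectionOp z → z ≠ 0 → InfiniteProj M z

theorem IsFactor.eq_one_of_isProjectionOp {M : VonNeumannAlgebra H} (hM : IsFactor M)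
    {z : H →L[ℂ] H} (hzM : z ∈ M) (hzM' : z ∈ M.commutant) (hz : IsProjectionOp z) (hne : z ≠ 0) :
    z = 1 := by
  obtain ⟨c, rfl⟩ := hM z hzM hzM'
  have hc : c ≠ 0 := left_ne_zero_of_smul hne
  refine smul_right_injective _ hc ?_
  simpa only [smul_mul_assoc, one_mul] using hz.2

theorem InfiniteFactor.isProperlyInfinite {M : VonNeumannAlgebra H} (hM : InfiniteFactor M) :
    IsProperlyInfinite M := by
  intro z hzM hzM' hz hne
  rw [hM.1.eq_one_of_isProjectionOp hzM hzM' hz hne]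
  exact hM.2

theorem stmt11_general (M R : VonNeumannAlgebra H) (hMR : ∀ x ∈ M, x ∈ R)
    (hM : IsProperlyInfinite M) (p : H →L[ℂ] H) (hpR : p ∈ R) (hpM : p ∈ M.commutant)
    (hproj : IsProjectionOp p) (hne : p ≠ 0) :
    InfiniteProj R p := by
  let z := centralSupport M.commutant p
  have hzM : z ∈ M := by simpa only [commutant_commutant] using
    centralSupport_mem_commutant M.commutant p
  have hz : IsProjectionOp z := isProjectionOp_centralSupport _ _
  have hinf : InfiniteProj M z :=
    hM z hzM (centralSupport_mem hpM) hz (centralSupport_ne_zero hne)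
  have hfaithful : ∀ e ∈ M, p * e = 0 → z * e = 0 := fun e he =>
    centralSupport_mul_eq_zero (by rwa [commutant_commutant])
  rw [← mul_centralSupport M.commutant p]
  exact hinf.compress hMR hpR hpM hproj hz hfaithful

theorem stmt11 (N M R : VonNeumannAlgebra H)
    (hNR : ∀ x : H →L[ℂ] H, x ∈ N → x ∈ R) (hMR : ∀ x : H →L[ℂ] H, x ∈ M → x ∈ R)
    (hNM : ∀ x : H →L[ℂ] H, x ∈ N → x ∈ M.commutant)
    (hM : InfiniteFactor M)
    (p : H →L[ℂ] H) (hpN : p ∈ N) (hproj : IsProjectionOp p) (hne : p ≠ 0) :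
    InfiniteProj R p :=
  stmt11_general M R hMR hM.isProperlyInfinite p (hNR p hpN) (hNM p hpN) hproj hne
end

section
/- Let N, M, R be von Neumann algebras acting on a separable complex Hilbert space H with N ⊆ R, M ⊆ R and N ⊆ M′. Suppose M is an infinite factor and R is a factor. Let w be a unitary operator on H and let u ∈ N be an isometry (u*·u = 1) such that w*·u·u*·w ∈ N. Then there exists a unitary operator W on H such that (W·u*)·x·(W·u*)* = (u*·w)·x·(u*·w)* for all x in the commutant R′ of R. -/
variable {H : Type*} [NormedAddCommGroup H] [InnerProductSpace ℂ H] [CompleteSpace H]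

/-!
Put `v = u*w`, so that `vv* = 1` and `q = v*v` is a projection in `R ∩ M'`. If some `t ∈ R` has
`t*t = 1` and `tt* = q`, then `W = vt` is unitary and implements on `R'` the same map as `v`. So
everything reduces to `q ~ 1` in `R`.

If `s ∈ M` is a non-unitary isometry then `sq ∈ R` realises an equivalence of `q` with `(ss*)q`, and
`(ss*)q ≠ q` because `(1 - ss*)q = 0` would force `q = 0`, `M` being a factor. Hence `q` is
infinite in `R`.

An infinite projection `q` of a factor on a separable space is equivalent to `1`: choose an isometry
`s ∈ R` commuting with `q` for which `f = 1 - ss*` is nonzero and lies under `q`. The maps `fr`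
with `r ∈ R` have no common kernel since `R` is a factor, and by separability countably many `frₙ`,
which may be scaled to be summable, already suffice. As the `sⁿf` have orthogonal ranges,
`X = ∑ sⁿfrₙ` is injective, and its polar part is an isometry of `R` with range under `q`. A
Cantor–Bernstein argument concludes.
-/

theorem commute_of_mul_mul_self {A : Type*} [Semigroup A] [StarMul A] {p b : A}
    (hp : IsStarProjection p) (hb : p * (b * p) = b * p)
    (hb' : p * (star b * p) = star b * p) : Commute p b := by
  have hpb : p * b * p = p * b := by
    simpa [mul_assoc, hp.isSelfAdjoint.star_eq] using congrArg star hb'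
  rw [commute_iff_eq, ← hpb, mul_assoc, hb]

theorem isStarProjection_star_mul_self_of_mul_star_self_eq_one {A : Type*} [Monoid A] [StarMul A]
    {v : A} (hv : v * star v = 1) :
    IsStarProjection (star v * v) :=
  ⟨by rw [IsIdempotentElem, mul_assoc, ← mul_assoc v, hv, one_mul], .star_mul_self v⟩

section StarRing

variable {A : Type*} [Ring A] [StarRing A]

theorem star_mul_self_mul_add_one_sub {v q : A} (hq : IsStarProjection q) (hqv : Commute q v) :
    star (v * q + (1 - q)) * (v * q + (1 - q)) = star v * v * q + (1 - q) := by
  have hqv' : Commute q (star v) := by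
    simpa only [hq.isSelfAdjoint.star_eq] using hqv.star_star
  have hdiag : q * star v * (v * q) = star v * v * q := by
    rw [hqv'.eq, mul_assoc, ← mul_assoc q, hqv.eq, mul_assoc v, hq.isIdempotentElem.eq, mul_assoc]
  have hcross : (1 - q) * (v * q) = 0 := by
    rw [← hqv.eq, ← mul_assoc, hq.one_sub_mul_self, zero_mul]
  have hcross' : q * star v * (1 - q) = 0 := by
    rw [hqv'.eq, mul_assoc, hq.mul_one_sub_self, mul_zero]
  rw [star_add, star_mul, hq.isSelfAdjoint.star_eq, hq.one_sub.isSelfAdjoint.star_eq, add_mul,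
    mul_add, mul_add, hdiag, hcross, hcross', hq.one_sub.isIdempotentElem.eq, add_zero, zero_add]

theorem mul_star_self_mul_add_one_sub {v q : A} (hq : IsStarProjection q) (hqv : Commute q v) :
    (v * q + (1 - q)) * star (v * q + (1 - q)) = v * star v * q + (1 - q) := by
  have hqv' : Commute q (star v) := by
    simpa only [hq.isSelfAdjoint.star_eq] using hqv.star_star
  simpa only [star_add, star_mul, star_star, hq.isSelfAdjoint.star_eq,
    hq.one_sub.isSelfAdjoint.star_eq, hqv.eq, hqv'.eq] using star_mul_self_mul_add_one_sub hq hqv'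

theorem one_sub_mul_star_mul_star_pow_mul_pow {s a : A} (hs : star s * s = 1)
    (ha : star s * a = 0) (m n : ℕ) :
    (1 - s * star s) * star s ^ m * (s ^ n * a) = if n = m then a else 0 := by
  have hs' : (1 - s * star s) * s = 0 := by rw [sub_mul, mul_assoc, hs]; simp
  rcases lt_trichotomy n m with h | rfl | h
  · obtain ⟨k, rfl⟩ := Nat.exists_eq_add_of_lt h
    have hpow : star s ^ (n + k + 1) * (s ^ n * a) = star s ^ k * (star s * a) := by
      rw [show n + k + 1 = k + 1 + n by ring, pow_add, mul_assoc, ← mul_assoc _ (s ^ n),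
        pow_mul_pow_eq_one n hs, one_mul, pow_succ, mul_assoc]
    rw [if_neg h.ne, mul_assoc, hpow, ha, mul_zero, mul_zero]
  · rw [if_pos rfl, mul_assoc, ← mul_assoc _ (s ^ n), pow_mul_pow_eq_one n hs, one_mul, sub_mul,
      one_mul, mul_assoc, ha, mul_zero, sub_zero]
  · obtain ⟨k, rfl⟩ := Nat.exists_eq_add_of_lt h
    have hpow : star s ^ m * (s ^ (m + k + 1) * a) = s * (s ^ k * a) := by
      rw [add_assoc, pow_add, mul_assoc, ← mul_assoc, pow_mul_pow_eq_one m hs, one_mul, pow_succ',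
        mul_assoc]
    rw [if_neg h.ne', mul_assoc, hpow, ← mul_assoc, hs', zero_mul]

theorem one_sub_mul_star_mul_star_pow_mul_tsum [TopologicalSpace A] [IsTopologicalRing A]
    [T2Space A] {s : A} {a : ℕ → A} (hs : star s * s = 1) (ha : ∀ n, star s * a n = 0)
    (hsum : Summable fun n ↦ s ^ n * a n) (m : ℕ) :
    (1 - s * star s) * star s ^ m * ∑' n, s ^ n * a n = a m := by
  rw [← hsum.tsum_mul_left]
  simp only [one_sub_mul_star_mul_star_pow_mul_pow hs (ha _), tsum_ite_eq]

end StarRing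

theorem mul_star_mul_self_of_isStarProjection {A : Type*} [NonUnitalNormedRing A] [StarRing A]
    [CStarRing A] {v : A} (hv : IsStarProjection (star v * v)) : v * (star v * v) = v := by
  rw [← sub_eq_zero, ← CStarRing.star_mul_self_eq_zero_iff]
  simp only [star_sub, star_mul, star_star, sub_mul, mul_sub]
  have hvv : star v * (v * (star v * v)) = star v * v := by
    rw [← mul_assoc, hv.isIdempotentElem.eq]
  simp only [mul_assoc, hvv, sub_self]

theorem exists_ne_zero_summable_smul {ι : Type*} [Countable ι] (𝕜 : Type*) {E : Type*}
    [NontriviallyNormedField 𝕜] [NormedAddCommGroup E] [NormedSpace 𝕜 E] [CompleteSpace E]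
    (g : ι → E) : ∃ c : ι → 𝕜, (∀ i, c i ≠ 0) ∧ Summable fun i ↦ c i • g i := by
  obtain ⟨ε, hε, _, hsum, -⟩ := NNReal.exists_pos_sum_of_countable one_ne_zero ι
  have hpos : ∀ i, (0 : ℝ) < ε i / (‖g i‖ + 1) := fun i ↦ div_pos (hε i) (by positivity)
  choose c hc hcε using fun i ↦ NormedField.exists_norm_lt 𝕜 (hpos i)
  refine ⟨c, fun i ↦ norm_pos_iff.1 (hc i),
    .of_norm_bounded (NNReal.summable_coe.2 hsum.summable) fun i ↦ ?_⟩
  calc ‖c i • g i‖ = ‖c i‖ * ‖g i‖ := norm_smul _ _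
    _ ≤ ε i / (‖g i‖ + 1) * (‖g i‖ + 1) := by gcongr; exacts [(hcε i).le, by linarith]
    _ = ε i := div_mul_cancel₀ _ (by positivity)

section Operators

theorem eq_of_mul_eq_mul_of_denseRange {𝕜 E : Type*} [Semiring 𝕜] [AddCommMonoid E] [Module 𝕜 E]
    [TopologicalSpace E] [T2Space E] {A B C : E →L[𝕜] E} (hA : DenseRange A)
    (h : B * A = C * A) : B = C :=
  DFunLike.coe_injective <| hA.equalizer B.continuous C.continuous <| congrArg DFunLike.coe h

variable {A B X : H →L[ℂ] H}

theorem norm_apply_eq_of_star_mul_self_eq (h : star A * A = star B * B) (x : H) :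
    ‖A x‖ = ‖B x‖ := by
  simp only [ContinuousLinearMap.apply_norm_eq_sqrt_inner_adjoint_left,
    ← ContinuousLinearMap.star_eq_adjoint, ← ContinuousLinearMap.mul_def, h]

theorem exists_isometry_mul_eq_of_star_mul_self_eq (hA : DenseRange A)
    (h : star A * A = star X * X) : ∃ T : H →L[ℂ] H, star T * T = 1 ∧ T * A = X := by
  let T : H →L[ℂ] H := (X : H →ₗ[ℂ] H).extendOfNorm (A : H →ₗ[ℂ] H)
  have hTA : T * A = X := by
    ext x
    refine LinearMap.extendOfNorm_eq (e := (A : H →ₗ[ℂ] H)) hA ⟨1, fun y ↦ ?_⟩ x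
    simpa using (norm_apply_eq_of_star_mul_self_eq h y).ge
  have hA' : star A * (star T * T) = star A := by
    apply eq_of_mul_eq_mul_of_denseRange hA
    rw [h, ← hTA, star_mul]
    simp only [mul_assoc]
  refine ⟨T, eq_of_mul_eq_mul_of_denseRange hA ?_, hTA⟩
  simpa [mul_assoc] using congrArg star hA'

theorem star_abs_mul_abs (X : H →L[ℂ] H) : star (CFC.abs X) * CFC.abs X = star X * X := by
  rw [(CFC.abs_nonneg X).isSelfAdjoint.star_eq, CFC.abs_mul_abs]

theorem denseRange_abs_of_injective (hX : Function.Injective X) :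
    DenseRange (CFC.abs X : H →L[ℂ] H) := by
  have hsa : star (CFC.abs X) = CFC.abs X := (CFC.abs_nonneg X).isSelfAdjoint.star_eq
  have hker : ∀ x, CFC.abs X x = 0 → x = 0 := fun x hx ↦ hX <| by
    rw [map_zero, ← norm_eq_zero, ← norm_apply_eq_of_star_mul_self_eq (star_abs_mul_abs X), hx,
      norm_zero]
  have hclosure : (CFC.abs X : H →L[ℂ] H).range.topologicalClosure = ⊤ := by
    rw [Submodule.topologicalClosure_eq_top_iff, ContinuousLinearMap.orthogonal_range,
      ← ContinuousLinearMap.star_eq_adjoint, hsa, Submodule.eq_bot_iff]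
    exact hker
  exact Submodule.dense_iff_topologicalClosure_eq_top.2 hclosure

variable {ι : Type*} (a : ι → H →L[ℂ] H)

instance completeSpace_iInf_ker : CompleteSpace ↥(⨅ i, (a i).ker) := by
  have hclosed : IsClosed ((⨅ i, (a i).ker : Submodule ℂ H) : Set H) := by
    rw [Submodule.coe_iInf]
    exact isClosed_iInter fun i ↦ (a i).isClosed_ker
  exact hclosed.completeSpace_coe

/-- The orthogonal projection onto the common kernel of a family of bounded operators. -/
noncomputable def commonKerProj : H →L[ℂ] H := (⨅ i, (a i).ker).starProjection

theorem isStarProjection_commonKerProj : IsStarProjection (commonKerProj a) :=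
  isStarProjection_starProjection

theorem commonKerProj_apply_eq_self_iff {x : H} :
    commonKerProj a x = x ↔ ∀ i, a i x = 0 := by
  simp [commonKerProj, Submodule.starProjection_eq_self_iff, Submodule.mem_iInf]

theorem commonKerProj_mul_eq_self_iff {b : H →L[ℂ] H} :
    commonKerProj a * b = b ↔ ∀ i, a i * b = 0 := by
  have hx : ∀ x, (commonKerProj a * b) x = b x ↔ ∀ i, (a i * b) x = 0 :=
    fun x ↦ commonKerProj_apply_eq_self_iff a
  simp only [ContinuousLinearMap.ext_iff, hx]
  exact forall_comm

theorem mul_commonKerProj (i : ι) : a i * commonKerProj a = 0 :=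
  (commonKerProj_mul_eq_self_iff a).1 (isStarProjection_commonKerProj a).isIdempotentElem i

end Operators

section VonNeumannAlgebra

variable {M R : VonNeumannAlgebra H} {q T X : H →L[ℂ] H}

theorem mem_iff_forall_mem_commutant_commute {x : H →L[ℂ] H} :
    x ∈ R ↔ ∀ y ∈ R.commutant, Commute y x := by
  conv_lhs => rw [← R.commutant_commutant, VonNeumannAlgebra.mem_commutant_iff]
  rfl

theorem isClosed_vonNeumannAlgebra (R : VonNeumannAlgebra H) :
    IsClosed (R : Set (H →L[ℂ] H)) := by
  rw [← R.centralizer_centralizer]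
  exact Set.isClosed_centralizer _

theorem commonKerProj_mem {ι : Type*} {a : ι → H →L[ℂ] H} (ha : ∀ i, a i ∈ R) :
    commonKerProj a ∈ R := by
  have hinv : ∀ y ∈ R.commutant,
      commonKerProj a * (y * commonKerProj a) = y * commonKerProj a := by
    intro y hy
    rw [commonKerProj_mul_eq_self_iff]
    intro i
    rw [← mul_assoc, ← (mem_iff_forall_mem_commutant_commute.1 (ha i) y hy).eq, mul_assoc,
      mul_commonKerProj, mul_zero]
  exact mem_iff_forall_mem_commutant_commute.2 fun y hy ↦ (commute_of_mul_mul_self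
    (isStarProjection_commonKerProj a) (hinv y hy) (hinv _ (star_mem hy))).symm

theorem IsFactor.eq_zero_or_eq_one {p : H →L[ℂ] H} (hR : IsFactor R) (hp : IsStarProjection p)
    (hpR : p ∈ R) (hpR' : p ∈ R.commutant) : p = 0 ∨ p = 1 := by
  obtain ⟨c, rfl⟩ := hR p hpR hpR'
  nontriviality H →L[ℂ] H
  have hc : (c * c) • (1 : H →L[ℂ] H) = c • 1 := by
    simpa [smul_smul] using hp.isIdempotentElem.eq
  have hcc : IsIdempotentElem c := smul_left_injective ℂ one_ne_zero hc
  rcases IsIdempotentElem.iff_eq_zero_or_one.1 hcc with rfl | rfl <;> simp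

theorem IsFactor.eq_zero_of_forall_apply_eq_zero {e : H →L[ℂ] H} (hR : IsFactor R) (he : e ∈ R)
    (he0 : e ≠ 0) {x : H} (hx : ∀ a ∈ R, e (a x) = 0) : x = 0 := by
  set p := commonKerProj fun a : R ↦ e * (a : H →L[ℂ] H)
  have hp : IsStarProjection p := isStarProjection_commonKerProj _
  have hpR : p ∈ R := commonKerProj_mem fun a ↦ mul_mem he a.2
  have hinv : ∀ y ∈ R, p * (y * p) = y * p := fun y hy ↦
    (commonKerProj_mul_eq_self_iff _).2 fun a ↦ by
      simpa only [mul_assoc] using mul_commonKerProj (fun a : R ↦ e * (a : H →L[ℂ] H))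
        ⟨a * y, mul_mem a.2 hy⟩
  have hpR' : p ∈ R.commutant := VonNeumannAlgebra.mem_commutant_iff.2 fun y hy ↦
    (commute_of_mul_mul_self hp (hinv y hy) (hinv _ (star_mem hy))).eq.symm
  have hpx : p x = x := (commonKerProj_apply_eq_self_iff _).2 fun a ↦ hx a a.2
  rcases hR.eq_zero_or_eq_one hp hpR hpR' with hp0 | hp1
  · rw [← hpx, hp0, zero_apply]
  · refine absurd ?_ he0
    calc e = e * (1 : R) * p := by simp [hp1]
      _ = 0 := mul_commonKerProj (fun a : R ↦ e * (a : H →L[ℂ] H)) 1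

theorem IsFactor.exists_seq_forall_apply_eq_zero [TopologicalSpace.SeparableSpace H]
    {e : H →L[ℂ] H} (hR : IsFactor R) (he : e ∈ R) (he0 : e ≠ 0) :
    ∃ r : ℕ → R, ∀ x, (∀ n, e ((r n : H →L[ℂ] H) x) = 0) → x = 0 := by
  have := UniformSpace.secondCountable_of_separable H
  obtain ⟨r, hr⟩ := eq_closed_inter_nat (fun a : R ↦ {x | e ((a : H →L[ℂ] H) x) = 0})
    fun a ↦ isClosed_eq (by fun_prop) continuous_const
  refine ⟨r, fun x hx ↦ hR.eq_zero_of_forall_apply_eq_zero he he0 fun a ha ↦ ?_⟩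
  have hmem : x ∈ ⋂ n, {x | e ((r n : H →L[ℂ] H) x) = 0} := Set.mem_iInter.2 hx
  rw [hr] at hmem
  exact Set.mem_iInter.1 hmem ⟨a, ha⟩

theorem IsFactor.eq_zero_or_eq_zero_of_mul_eq_zero {e f : H →L[ℂ] H} (hR : IsFactor R)
    (he : e ∈ R) (hf : f ∈ R.commutant) (hef : e * f = 0) : e = 0 ∨ f = 0 := by
  refine or_iff_not_imp_left.2 fun he0 ↦ ?_
  ext x
  refine hR.eq_zero_of_forall_apply_eq_zero he he0 fun a ha ↦ ?_
  have : e * (a * f) = 0 := by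
    rw [VonNeumannAlgebra.mem_commutant_iff.1 hf a ha, ← mul_assoc, hef, zero_mul]
  exact DFunLike.congr_fun this x

theorem exists_isometry_mem_mul_abs_eq (hX : X ∈ R) (hinj : Function.Injective X) :
    ∃ T ∈ R, star T * T = 1 ∧ T * CFC.abs X = X := by
  have hdense := denseRange_abs_of_injective hinj
  obtain ⟨T, hT, hTX⟩ := exists_isometry_mul_eq_of_star_mul_self_eq hdense (star_abs_mul_abs X)
  refine ⟨T, mem_iff_forall_mem_commutant_commute.2 fun y hy ↦ ?_, hT, hTX⟩
  have hyX : Commute y X := mem_iff_forall_mem_commutant_commute.1 hX y hy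
  have hyX' : Commute (star y) X := mem_iff_forall_mem_commutant_commute.1 hX _ (star_mem hy)
  have hyabs : Commute (CFC.abs X) y := hyX.symm.cfcAbs_left hyX'.symm
  apply eq_of_mul_eq_mul_of_denseRange hdense
  rw [mul_assoc, hTX, mul_assoc, ← hyabs.eq, ← mul_assoc, hTX, hyX.eq]

theorem exists_isStarProjection_mem_commute (hT : T ∈ R) (hTT : star T * T = 1)
    (hq : IsStarProjection q) (hqR : q ∈ R) (hqT : q * T = T) :
    ∃ p ∈ R, IsStarProjection p ∧ Commute p T ∧ q * p = p ∧
      p * (q - T * star T) = q - T * star T := by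
  -- `p` projects onto the vectors whose whole orbit under `star T` lies in the range of `q`.
  set a : ℕ → H →L[ℂ] H := fun n ↦ (1 - q) * star T ^ n
  set p := commonKerProj a
  have hp : IsStarProjection p := isStarProjection_commonKerProj a
  have hpR : p ∈ R := commonKerProj_mem fun n ↦
    mul_mem (sub_mem (one_mem R) hqR) (pow_mem (star_mem hT) n)
  have hap : ∀ n, a n * p = 0 := mul_commonKerProj a
  have hTq : star T * q = star T := by
    simpa only [star_mul, hq.isSelfAdjoint.star_eq] using congrArg star hqT
  have hqp : q * p = p := by
    simpa [a, sub_mul, sub_eq_zero, eq_comm (a := p)] using hap 0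
  have hpTp : p * (T * p) = T * p := (commonKerProj_mul_eq_self_iff a).2 fun n ↦ by
    cases n with
    | zero => simp [a, sub_mul, ← mul_assoc, hqT]
    | succ n =>
      rw [← hap n, ← mul_assoc]
      simp only [a, pow_succ, mul_assoc, hTT, mul_one]
  have hpTp' : p * (star T * p) = star T * p := (commonKerProj_mul_eq_self_iff a).2 fun n ↦ by
    simpa only [a, pow_succ, mul_assoc] using hap (n + 1)
  refine ⟨p, hpR, hp, commute_of_mul_mul_self hp hpTp hpTp', hqp,
    (commonKerProj_mul_eq_self_iff a).2 fun n ↦ ?_⟩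
  · cases n with
    | zero => simp [a, sub_mul, mul_sub, ← mul_assoc, hqT, hq.isIdempotentElem.eq]
    | succ n =>
      have : star T * (q - T * star T) = 0 := by
        rw [mul_sub, ← mul_assoc, hTT, one_mul, hTq, sub_self]
      simp only [a, pow_succ, mul_assoc, this, mul_zero]

theorem mvNEquiv_one_of_isometry_mem (hT : T ∈ R) (hTT : star T * T = 1)
    (hq : IsStarProjection q) (hqR : q ∈ R) (hqT : q * T = T) : MvNEquiv R 1 q := by
  obtain ⟨p, hpR, hp, hpT, hqp, hpq⟩ := exists_isStarProjection_mem_commute hT hTT hq hqR hqT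
  have hqTp : q * (1 - p) = T * star T * (1 - p) := by
    have : (q - T * star T) * p = q - T * star T := by
      simpa only [star_mul, star_sub, star_star, hp.isSelfAdjoint.star_eq,
        hq.isSelfAdjoint.star_eq] using congrArg star hpq
    rw [← sub_eq_zero, ← sub_mul, mul_sub, mul_one, this, sub_self]
  have hpT' : Commute (1 - p) T := .sub_left (.one_left T) hpT
  -- `T` on the range of `1 - p` and the identity on the range of `p`.
  refine ⟨T * (1 - p) + (1 - (1 - p)), ?_, ?_, ?_⟩
  · have hpR' : 1 - p ∈ R := sub_mem (one_mem R) hpR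
    exact add_mem (mul_mem hT hpR') (sub_mem (one_mem R) hpR')
  · rw [star_mul_self_mul_add_one_sub hp.one_sub hpT', hTT, one_mul, add_sub_cancel]
  · rw [mul_star_self_mul_add_one_sub hp.one_sub hpT', ← hqTp, mul_sub, mul_one, hqp,
      sub_sub_cancel, sub_add_cancel]

theorem InfiniteProj.ne_zero (h : InfiniteProj R q) : q ≠ 0 := by
  rintro rfl
  obtain ⟨p, -, -, hp, hne, -⟩ := h
  exact hne (by rw [← hp, mul_zero])

theorem InfiniteProj.exists_isometry (h : InfiniteProj R q) (hq : IsStarProjection q) :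
    ∃ s ∈ R, star s * s = 1 ∧ s * star s ≠ 1 ∧ Commute q s ∧
      q * (1 - s * star s) = 1 - s * star s := by
  obtain ⟨p, -, ⟨hp, -⟩, hpq, hne, v, hvR, hvv, hvp⟩ := h
  have hqp : q * p = p := by
    simpa only [star_mul, hp.star_eq, hq.isSelfAdjoint.star_eq] using congrArg star hpq
  have hvq : v * q = v := by
    rw [← hvv] at hq ⊢
    exact mul_star_mul_self_of_isStarProjection hq
  have hpv : p * v = v := by rw [← hvp, mul_assoc, hvv, hvq]
  have hqv : q * v = v := by rw [← hpv, ← mul_assoc, hqp]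
  have hqR : q ∈ R := hvv ▸ mul_mem (star_mem hvR) hvR
  have hcomm : Commute q v := hqv.trans hvq.symm
  have hss : star (v * q + (1 - q)) * (v * q + (1 - q)) = 1 := by
    rw [star_mul_self_mul_add_one_sub hq hcomm, hvv, hq.isIdempotentElem.eq, add_sub_cancel]
  have hss' : 1 - (v * q + (1 - q)) * star (v * q + (1 - q)) = q - p := by
    rw [mul_star_self_mul_add_one_sub hq hcomm, hvp, hpq]
    abel
  refine ⟨v * q + (1 - q), add_mem (mul_mem hvR hqR) (sub_mem (one_mem R) hqR), hss,
    fun h ↦ hne ?_, ?_, ?_⟩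
  · rw [h, sub_self] at hss'
    exact (sub_eq_zero.1 hss'.symm).symm
  · exact .add_right (hcomm.mul_right (.refl q)) (.sub_right (.one_right q) (.refl q))
  · rw [hss', mul_sub, hq.isIdempotentElem.eq, hqp]

theorem IsFactor.exists_injective_mem [TopologicalSpace.SeparableSpace H] (hR : IsFactor R)
    {s : H →L[ℂ] H} (hsR : s ∈ R) (hs : star s * s = 1) (hs' : s * star s ≠ 1)
    (hqs : Commute q s) (hq : q * (1 - s * star s) = 1 - s * star s) :
    ∃ X ∈ R, Function.Injective X ∧ q * X = X := by
  set f := 1 - s * star s with hf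
  have hfR : f ∈ R := sub_mem (one_mem R) (mul_mem hsR (star_mem hsR))
  have hsf : star s * f = 0 := by rw [hf, mul_sub, ← mul_assoc, hs]; simp
  obtain ⟨r, hr⟩ := hR.exists_seq_forall_apply_eq_zero hfR (sub_ne_zero.2 hs'.symm)
  obtain ⟨c, hc, hsum⟩ := exists_ne_zero_summable_smul ℂ
    fun n ↦ s ^ n * (f * (r n : H →L[ℂ] H))
  set a : ℕ → H →L[ℂ] H := fun n ↦ f * (c n • (r n : H →L[ℂ] H)) with ha
  have haR : ∀ n, a n ∈ R := fun n ↦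
    mul_mem hfR (R.toStarSubalgebra.smul_mem (r n).2 (c n))
  replace hsum : Summable fun n ↦ s ^ n * a n := by simpa only [ha, mul_smul_comm] using hsum
  have hsa : ∀ n, star s * a n = 0 := fun n ↦ by rw [ha, ← mul_assoc, hsf, zero_mul]
  refine ⟨∑' n, s ^ n * a n, ?_, ?_, ?_⟩
  · exact tsum_mem (isClosed_vonNeumannAlgebra R) fun n ↦ mul_mem (pow_mem hsR n) (haR n)
  · refine (injective_iff_map_eq_zero _).2 fun x hx ↦ hr x fun m ↦ ?_
    have hax : a m x = 0 := by
      rw [← one_sub_mul_star_mul_star_pow_mul_tsum hs hsa hsum m]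
      exact (congrArg ⇑((1 - s * star s) * star s ^ m) hx).trans (map_zero _)
    simpa [ha, hc m] using hax
  · rw [← hsum.tsum_mul_left]
    refine tsum_congr fun n ↦ ?_
    rw [← mul_assoc, (hqs.pow_right n).eq, mul_assoc, ha, ← mul_assoc q, hq]

theorem InfiniteProj.mvNEquiv_one [TopologicalSpace.SeparableSpace H] (h : InfiniteProj R q)
    (hR : IsFactor R) (hq : IsStarProjection q) : MvNEquiv R 1 q := by
  obtain ⟨s, hsR, hs, hs', hqs, hqf⟩ := h.exists_isometry hq
  obtain ⟨X, hXR, hX, hqX⟩ := hR.exists_injective_mem hsR hs hs' hqs hqf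
  obtain ⟨T, hTR, hT, hTX⟩ := exists_isometry_mem_mul_abs_eq hXR hX
  have hqT : q * T = T := eq_of_mul_eq_mul_of_denseRange (denseRange_abs_of_injective hX) <| by
    rw [mul_assoc, hTX, hqX]
  obtain ⟨-, -, -, -, -, v, hv, hvq, -⟩ := h
  exact mvNEquiv_one_of_isometry_mem hTR hT hq (hvq ▸ mul_mem (star_mem hv) hv) hqT

theorem InfiniteFactor.infiniteProj_of_mem_commutant (hM : InfiniteFactor M) (hMR : M ≤ R)
    (hq : IsStarProjection q) (hqR : q ∈ R) (hqM : q ∈ M.commutant) (hq0 : q ≠ 0) :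
    InfiniteProj R q := by
  obtain ⟨hMf, _, hpM, hp, -, hp1, s, hsM, hs, rfl⟩ := hM
  have hqq := hq.isIdempotentElem.eq
  have hpq : Commute (s * star s) q := VonNeumannAlgebra.mem_commutant_iff.1 hqM _ hpM
  have hp' : IsStarProjection (s * star s * q) :=
    (IsStarProjection.mk hp.2 hp.1).mul hq hpq
  refine ⟨s * star s * q, mul_mem (hMR hpM) hqR, ⟨hp'.isSelfAdjoint, hp'.isIdempotentElem⟩,
    by rw [mul_assoc, hqq], fun heq ↦ ?_, s * q, mul_mem (hMR hsM) hqR, ?_, ?_⟩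
  · have hpq0 : (1 - s * star s) * q = 0 := by rw [sub_mul, one_mul, heq, sub_self]
    rcases hMf.eq_zero_or_eq_zero_of_mul_eq_zero (sub_mem (one_mem M) hpM) hqM hpq0 with h | h
    · exact hp1 (sub_eq_zero.1 h).symm
    · exact hq0 h
  · rw [star_mul, hq.isSelfAdjoint.star_eq, mul_assoc, ← mul_assoc (star s), hs, one_mul, hqq]
  · rw [star_mul, hq.isSelfAdjoint.star_eq, mul_assoc, ← mul_assoc q, hqq,
      VonNeumannAlgebra.mem_commutant_iff.1 hqM _ (star_mem hsM)|>.symm, mul_assoc]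

theorem exists_unitary_conj_eq_of_mvNEquiv_one {v : H →L[ℂ] H} (hv : v * star v = 1)
    (h : MvNEquiv R 1 (star v * v)) :
    ∃ W : H →L[ℂ] H, star W * W = 1 ∧ W * star W = 1 ∧
      ∀ x ∈ R.commutant, W * x * star W = v * x * star v := by
  obtain ⟨t, htR, ht, ht'⟩ := h
  refine ⟨v * t, ?_, ?_, fun x hx ↦ ?_⟩
  · calc star (v * t) * (v * t) = star t * (star v * v) * t := by simp only [star_mul, mul_assoc]
      _ = star t * t * (star t * t) := by simp only [← ht', mul_assoc]
      _ = 1 := by rw [ht, one_mul]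
  · calc v * t * star (v * t) = v * (t * star t) * star v := by simp only [star_mul, mul_assoc]
      _ = v * star v * (v * star v) := by simp only [ht', mul_assoc]
      _ = 1 := by rw [hv, one_mul]
  · have hxt : t * x = x * t := VonNeumannAlgebra.mem_commutant_iff.1 hx t htR
    calc v * t * x * star (v * t) = v * (t * x) * star t * star v := by
          simp only [star_mul, mul_assoc]
      _ = v * x * (t * star t) * star v := by simp only [hxt, mul_assoc]
      _ = v * x * star v * (v * star v) := by simp only [ht', mul_assoc]
      _ = v * x * star v := by rw [hv, mul_one]

end VonNeumannAlgebra

theorem stmt12_general [TopologicalSpace.SeparableSpace H] {M R : VonNeumannAlgebra H}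
    (hMR : M ≤ R) (hM : InfiniteFactor M) (hR : IsFactor R) {w u : H →L[ℂ] H}
    (hw : w * star w = 1) (huR : u ∈ R) (hu : star u * u = 1)
    (hqR : star w * (u * star u) * w ∈ R) (hqM : star w * (u * star u) * w ∈ M.commutant) :
    ∃ W : H →L[ℂ] H, star W * W = 1 ∧ W * star W = 1 ∧
      ∀ x ∈ R.commutant,
        (W * star u) * x * star (W * star u) = (star u * w) * x * star (star u * w) := by
  set v := star u * w with hv_def
  have hv : v * star v = 1 := by
    rw [hv_def, star_mul, star_star, mul_assoc, ← mul_assoc w, hw, one_mul, hu]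
  have hvv : star w * (u * star u) * w = star v * v := by
    simp only [hv_def, star_mul, star_star, mul_assoc]
  rw [hvv] at hqR hqM
  have hq := isStarProjection_star_mul_self_of_mul_star_self_eq_one hv
  have hq0 : star v * v ≠ 0 := fun h ↦ hM.2.ne_zero <| by
    rw [← hv, (CStarRing.star_mul_self_eq_zero_iff v).1 h, zero_mul]
  obtain ⟨W, hW, hW', hWv⟩ := exists_unitary_conj_eq_of_mvNEquiv_one hv <|
    (hM.infiniteProj_of_mem_commutant hMR hq hqR hqM hq0).mvNEquiv_one hR hq
  refine ⟨W, hW, hW', fun x hx ↦ ?_⟩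
  have hux : star u * x * u = x := by
    rw [mul_assoc, ← VonNeumannAlgebra.mem_commutant_iff.1 hx u huR, ← mul_assoc, hu, one_mul]
  calc W * star u * x * star (W * star u) = W * (star u * x * u) * star W := by
        simp only [star_mul, star_star, mul_assoc]
    _ = v * x * star v := by rw [hux, hWv x hx]

theorem stmt12 [TopologicalSpace.SeparableSpace H]
    (N M R : VonNeumannAlgebra H)
    (hNR : ∀ x : H →L[ℂ] H, x ∈ N → x ∈ R) (hMR : ∀ x : H →L[ℂ] H, x ∈ M → x ∈ R)
    (hNM : ∀ x : H →L[ℂ] H, x ∈ N → x ∈ M.commutant)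
    (hM : InfiniteFactor M) (hR : IsFactor R)
    (w : H →L[ℂ] H) (hw₁ : star w * w = 1) (hw₂ : w * star w = 1)
    (u : H →L[ℂ] H) (huN : u ∈ N) (hiso : star u * u = 1)
    (hmem : star w * (u * star u) * w ∈ N) :
    ∃ W : H →L[ℂ] H, star W * W = 1 ∧ W * star W = 1 ∧
      ∀ x : H →L[ℂ] H, x ∈ R.commutant →
        (W * star u) * x * star (W * star u) = (star u * w) * x * star (star u * w) :=
  stmt12_general (fun x hx ↦ hMR x hx) hM hR hw₂ (hNR u huN) hiso (hNR _ hmem) (hNM _ hmem)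
end
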